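/- Let (σ_i)_{i∈Π} be a Nash equilibrium in a quantitative multiplayer reachability game G. Then there exists a Nash equilibrium (τ_i)_{i∈Π} of the same type whose outcome is of the form αβ^ω, where Visit(α) equals the type of (σ_i)_{i∈Π} and |αβ| < (|Π|+1)·|V|. -/

import Mathlib

/-- A quantitative multiplayer reachability game: a finite directed graph whose
vertex set is partitioned among the players (via `owner`), with an initial vertex `v0`,
an edge relation `E` such that every vertex has an outgoing edge, and a goal set
`goal i` for each player `i`. -/
structure ReachGame (P : Type) (V : Type) where
  owner : V → P
  v0 : V
  E : V → V → Prop
  total : ∀ v : V, ∃ w : V, E v w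
  goal : P → Set V

namespace ReachGame

variable {P V : Type} [DecidableEq P] (G : ReachGame P V)

/-- The last vertex of a history (with default `v0`). -/
def lastV (h : List V) : V := h.getLastD G.v0

/-- A history: a nonempty finite path in the graph starting at `v0`. -/
def IsHistory (h : List V) : Prop :=
  h ≠ [] ∧ h.head? = some G.v0 ∧ List.Chain' G.E h

/-- A play: an infinite path starting at `v0`. -/
def IsPlay (ρ : ℕ → V) : Prop :=
  ρ 0 = G.v0 ∧ ∀ k : ℕ, G.E (ρ k) (ρ (k + 1))

/-- `σ` is a (total encoding of a) strategy of player `i`: on every history ending in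
a vertex owned by `i` it chooses a successor along an edge. -/
def IsStrategy (i : P) (σ : List V → V) : Prop :=
  ∀ h : List V, G.IsHistory h → G.owner (G.lastV h) = i → G.E (G.lastV h) (σ h)

/-- A strategy profile: one strategy per player. -/
def IsProfile (prof : P → List V → V) : Prop :=
  ∀ i : P, G.IsStrategy i (prof i)

/-- The history of length `n` (i.e. with `n` edges) obtained by letting the players
follow the profile `prof` from `v0`. -/
def outHist (prof : P → List V → V) : ℕ → List V
  | 0 => [G.v0]
  | n + 1 => outHist prof n ++ [prof (G.owner (G.lastV (outHist prof n))) (outHist prof n)]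

/-- The outcome play of the strategy profile `prof`. -/
def outcome (prof : P → List V → V) (n : ℕ) : V :=
  G.lastV (G.outHist prof n)

/-- The cost of player `i` for the play `ρ`: the least `l` with `ρ l ∈ goal i`,
and `⊤` (`+∞`) if there is no such `l`. -/
noncomputable def cost (i : P) (ρ : ℕ → V) : ℕ∞ :=
  sInf {n : ℕ∞ | ∃ l : ℕ, n = (l : ℕ∞) ∧ ρ l ∈ G.goal i}

/-- Nash equilibrium: no player can strictly decrease his cost by a unilateral
deviation. -/
def IsNash (prof : P → List V → V) : Prop :=
  ∀ (j : P) (σ' : List V → V), G.IsStrategy j σ' →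
    G.cost j (G.outcome prof) ≤ G.cost j (G.outcome (Function.update prof j σ'))

/-- `h ≈_σ h'` : the strategy `σ` of player `i` behaves the same after `h` and `h'`,
i.e. `σ (h ++ δ) = σ (h' ++ δ)` for every suffix `δ` making both `h ++ δ` and
`h' ++ δ` histories ending in a vertex of player `i`. -/
def MemEq (i : P) (σ : List V → V) (h h' : List V) : Prop :=
  ∀ δ : List V,
    G.IsHistory (h ++ δ) → G.owner (G.lastV (h ++ δ)) = i →
    G.IsHistory (h' ++ δ) → G.owner (G.lastV (h' ++ δ)) = i →
    σ (h ++ δ) = σ (h' ++ δ)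

/-- A strategy of player `i` is finite-memory if the relation `≈_σ` has finitely many
equivalence classes on histories, i.e. there is a finite set of histories meeting
every class. -/
def FiniteMemory (i : P) (σ : List V → V) : Prop :=
  ∃ S : Finset (List V), ∀ h : List V, G.IsHistory h →
    ∃ h' ∈ S, G.IsHistory h' ∧ G.MemEq i σ h h'

/-- A profile is finite-memory if each of its strategies is. -/
def FiniteMemoryProfile (prof : P → List V → V) : Prop :=
  ∀ i : P, G.FiniteMemory i (prof i)

/-- `Visit h`: the set of players whose goal set is visited by the finite path `h`. -/
def visitL (h : List V) : Set P := {i : P | ∃ v ∈ h, v ∈ G.goal i}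

/-- The type of a strategy profile: the set of players whose goal set is visited by
the outcome. -/
def typeOf (prof : P → List V → V) : Set P :=
  {i : P | ∃ l : ℕ, G.outcome prof l ∈ G.goal i}

/-! ### The truncated game `G^d` -/

/-- A strategy of player `i` in the truncated game `G^d` : it chooses a successor on
every history with less than `d` edges (list length `≤ d`) ending in a vertex of `i`. -/
def IsStrategyTrunc (d : ℕ) (i : P) (σ : List V → V) : Prop :=
  ∀ h : List V, G.IsHistory h → h.length ≤ d → G.owner (G.lastV h) = i →
    G.E (G.lastV h) (σ h)

/-- A strategy profile of the truncated game `G^d`. -/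
def IsProfileTrunc (d : ℕ) (prof : P → List V → V) : Prop :=
  ∀ i : P, G.IsStrategyTrunc d i (prof i)

/-- The cost of player `i` for a finite play `h` (a list of vertices): the least
position of `h` lying in `goal i`, and `⊤` if `goal i` is not visited. -/
noncomputable def costList (i : P) (h : List V) : ℕ∞ :=
  sInf {n : ℕ∞ | ∃ l : ℕ, n = (l : ℕ∞) ∧ l < h.length ∧ h.getD l G.v0 ∈ G.goal i}

/-- Nash equilibrium of the truncated game `G^d` (whose plays are the histories with
exactly `d` edges). -/
def IsNashTrunc (d : ℕ) (prof : P → List V → V) : Prop :=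
  ∀ (j : P) (σ' : List V → V), G.IsStrategyTrunc d j σ' →
    G.costList j (G.outHist prof d) ≤
      G.costList j (G.outHist (Function.update prof j σ') d)

/-- The type of a strategy profile of the truncated game `G^d`. -/
def typeOfTrunc (d : ℕ) (prof : P → List V → V) : Set P :=
  G.visitL (G.outHist prof d)

end ReachGame

namespace ReachGame

section Aux

variable {P V : Type} (G : ReachGame P V)

theorem outcome_zero (prof : P → List V → V) : G.outcome prof 0 = G.v0 := by
  simp [outcome, outHist, lastV]

theorem outcome_succ (prof : P → List V → V) (n : ℕ) :
    G.outcome prof (n + 1) = prof (G.owner (G.outcome prof n)) (G.outHist prof n) := by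
  simp [outcome, outHist, lastV]

theorem outHist_eq (prof : P → List V → V) (n : ℕ) :
    G.outHist prof n = (List.range (n + 1)).map (G.outcome prof) := by
  induction n with
  | zero => simp [outHist, outcome_zero]
  | succ n ih =>
    rw [List.range_succ, List.map_append, ← ih]
    simp [outHist, outcome, lastV]

theorem hist_of_play {ρ : ℕ → V} (n : ℕ) (h0 : ρ 0 = G.v0)
    (h : ∀ k < n, G.E (ρ k) (ρ (k + 1))) :
    G.IsHistory ((List.range (n + 1)).map ρ) := by
  refine ⟨by simp, by simp [List.range_succ_eq_map, h0], ?_⟩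
  show List.IsChain _ _
  rw [List.isChain_iff_getElem]
  intro i hi
  simp at hi ⊢
  exact h i hi

theorem lastV_map (ρ : ℕ → V) (n : ℕ) : G.lastV ((List.range (n + 1)).map ρ) = ρ n := by
  simp [lastV, List.range_succ]

theorem isPlay_outcome {prof : P → List V → V} (hp : G.IsProfile prof) :
    G.IsPlay (G.outcome prof) := by
  refine ⟨G.outcome_zero prof, ?_⟩
  intro k
  induction k using Nat.strong_induction_on with
  | _ k ih =>
    have hh := G.hist_of_play k (G.outcome_zero prof) ih
    have := hp (G.owner (G.outcome prof k)) _ hh (by rw [lastV_map])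
    rw [lastV_map] at this
    rw [outcome_succ, outHist_eq]
    exact this

/-- Vertices from which player `j` can force a visit of his goal within `n` steps. -/
def W (j : P) : ℕ → Set V
  | 0 => G.goal j
  | n + 1 => {v | v ∈ G.goal j ∨ (G.owner v = j ∧ ∃ w, G.E v w ∧ w ∈ W j n) ∨
      (G.owner v ≠ j ∧ ∀ w, G.E v w → w ∈ W j n)}

theorem _root_.Nat.add_mod_eq_ite_aux (m p : ℕ) (hp : 0 < p) :
    (m + 1) % p = if m % p + 1 = p then 0 else m % p + 1 := by
  have hlt := Nat.mod_lt m hp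
  rw [← Nat.mod_add_mod]
  split_ifs with h
  · rw [h, Nat.mod_self]
  · exact Nat.mod_eq_of_lt (by omega)

theorem W_succ (j : P) (n : ℕ) : G.W j n ⊆ G.W j (n + 1) := by
  induction n with
  | zero => intro v hv; exact Or.inl hv
  | succ n ih =>
    rintro v (hv | ⟨ho, w, hw, hw'⟩ | ⟨ho, hw⟩)
    · exact Or.inl hv
    · exact Or.inr (Or.inl ⟨ho, w, hw, ih hw'⟩)
    · exact Or.inr (Or.inr ⟨ho, fun w h => ih (hw w h)⟩)

theorem W_mono (j : P) : Monotone (G.W j) := monotone_nat_of_le_succ (G.W_succ j)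

theorem exists_coal [Finite V] (j : P) (v : V) :
    ∃ w, G.E v w ∧ (G.owner v ≠ j → ∀ n, w ∈ G.W j n → v ∈ G.W j (n + 1)) := by
  by_cases ho : G.owner v = j
  · obtain ⟨w, hw⟩ := G.total v
    exact ⟨w, hw, fun h => absurd ho h⟩
  by_contra! hcon
  have h2 : ∀ w : {w // G.E v w}, ∃ n, w.1 ∈ G.W j n ∧ v ∉ G.W j (n + 1) :=
    fun w => (hcon w.1 w.2).2
  choose f hf hf' using h2
  obtain ⟨w, hw⟩ := G.total v
  haveI : Nonempty {w // G.E v w} := ⟨⟨w, hw⟩⟩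
  obtain ⟨w0, hw0⟩ := Finite.exists_max f
  apply hf' w0
  refine Or.inr (Or.inr ⟨ho, fun w hw => ?_⟩)
  exact G.W_mono j (hw0 ⟨w, hw⟩) (hf ⟨w, hw⟩)

theorem exists_pick (j : P) (n : ℕ) (v : V) :
    ∃ w, G.E v w ∧ ((∃ w', G.E v w' ∧ w' ∈ G.W j n) → w ∈ G.W j n) := by
  by_cases h : ∃ w', G.E v w' ∧ w' ∈ G.W j n
  · obtain ⟨w, hw, hw'⟩ := h
    exact ⟨w, hw, fun _ => hw'⟩
  · obtain ⟨w, hw⟩ := G.total v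
    exact ⟨w, hw, fun h' => absurd h' h⟩

theorem cost_le_iff (j : P) (ρ π : ℕ → V) :
    G.cost j ρ ≤ G.cost j π ↔ ∀ l, π l ∈ G.goal j → ∃ l' ≤ l, ρ l' ∈ G.goal j := by
  constructor
  · intro h l hl
    by_contra! hcon
    have h1 : G.cost j π ≤ l := sInf_le ⟨l, rfl, hl⟩
    have h2 : ((l + 1 : ℕ) : ℕ∞) ≤ G.cost j ρ := by
      apply le_sInf
      rintro _ ⟨m, rfl, hm⟩
      have : ¬ m ≤ l := fun h => hcon m h hm
      exact_mod_cast (by omega : l + 1 ≤ m)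
    have h3 : ((l + 1 : ℕ) : ℕ∞) ≤ (l : ℕ∞) := h2.trans (h.trans h1)
    have h4 : l + 1 ≤ l := by exact_mod_cast h3
    omega
  · intro h
    apply le_sInf
    rintro _ ⟨m, rfl, hm⟩
    obtain ⟨l, hl, hl'⟩ := h m hm
    exact (sInf_le ⟨l, rfl, hl'⟩ : G.cost j ρ ≤ l).trans (by exact_mod_cast hl)

/-- The condition characterizing outcomes of Nash equilibria. -/
def Good (ρ : ℕ → V) : Prop :=
  ∀ j k n, ρ k ∈ G.W j n → ∃ l ≤ k + n, ρ l ∈ G.goal j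

theorem isProfile_update [DecidableEq P] {prof : P → List V → V} (hp : G.IsProfile prof) {j : P}
    {σ : List V → V} (hσ : G.IsStrategy j σ) : G.IsProfile (Function.update prof j σ) := by
  intro i
  by_cases h : i = j
  · subst h; simpa using hσ
  · simpa [h] using hp i

theorem good_of_nash [DecidableEq P] {prof : P → List V → V} (hp : G.IsProfile prof)
    (hn : G.IsNash prof) : G.Good (G.outcome prof) := by
  intro j k n hk
  choose pick hpick hpick' using G.exists_pick
  let σ : List V → V := fun h =>
    if h.length ≤ k then prof j h else pick j (n - (h.length - 1 - k) - 1) (G.lastV h)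
  have hσ : G.IsStrategy j σ := by
    intro h hh ho
    by_cases hl : h.length ≤ k
    · simpa [σ, hl] using hp j h hh ho
    · simpa [σ, hl] using hpick _ _ _
  have hup := G.isProfile_update hp hσ
  have hplay := G.isPlay_outcome hup
  set π := G.outcome (Function.update prof j σ) with hπ
  have hag : ∀ m ≤ k, G.outHist (Function.update prof j σ) m = G.outHist prof m := by
    intro m
    induction m with
    | zero => intro _; rfl
    | succ m ih =>
      intro hm
      have ih := ih (by omega)
      simp only [outHist, ih]
      congr 2
      by_cases ho : G.owner (G.lastV (G.outHist prof m)) = j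
      · rw [ho]
        have : (G.outHist prof m).length ≤ k := by rw [outHist_eq]; simp; omega
        simp [σ, this]
      · simp [ho]
  have hinv : ∀ i ≤ n, (∃ l ≤ k + i, π l ∈ G.goal j) ∨ π (k + i) ∈ G.W j (n - i) := by
    intro i
    induction i with
    | zero =>
      intro _
      right
      have : π k = G.outcome prof k := by simp only [hπ, outcome, hag k le_rfl]
      simpa [this] using hk
    | succ i ih =>
      intro hi
      rcases ih (by omega) with ⟨l, hl, hl'⟩ | h
      · exact Or.inl ⟨l, by omega, hl'⟩
      obtain ⟨m, hm⟩ : ∃ m, n - i = m + 1 := ⟨n - i - 1, by omega⟩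
      have hm' : n - (i + 1) = m := by omega
      rw [hm] at h
      rw [hm']
      rcases h with h | ⟨ho, hw⟩ | ⟨ho, hw⟩
      · exact Or.inl ⟨k + i, by omega, h⟩
      · right
        have e : π (k + (i + 1)) = pick j m (π (k + i)) := by
          rw [← add_assoc, hπ, outcome_succ, ← hπ, ho, outHist_eq]
          have e1 : ¬ (k + i + 1 ≤ k) := by omega
          have e2 : n - (k + i - k) - 1 = m := by omega
          simp only [Function.update_self, σ, List.length_map, List.length_range, e1, if_false,
            lastV_map, Nat.add_sub_cancel, e2]
          rfl
        rw [e]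
        exact hpick' _ _ _ hw
      · right
        exact hw _ (hplay.2 (k + i))
  have hfin : ∃ l ≤ k + n, π l ∈ G.goal j := by
    rcases hinv n le_rfl with h | h
    · exact h
    · rw [Nat.sub_self] at h
      exact ⟨k + n, le_rfl, h⟩
  obtain ⟨l, hl, hl'⟩ := hfin
  obtain ⟨l2, h2, h3⟩ := (G.cost_le_iff j _ _).1 (hn j σ hσ) l hl'
  exact ⟨l2, by omega, h3⟩

theorem nash_of_good [DecidableEq P] [Finite V] {ρ : ℕ → V} (hplay : G.IsPlay ρ)
    (hg : G.Good ρ) :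
    ∃ τ, G.IsProfile τ ∧ G.IsNash τ ∧ G.outcome τ = ρ := by
  classical
  choose coal hcoal hcoal' using G.exists_coal
  let t : List V → V := fun h =>
    if hx : ∃ d, d < h.length ∧ h.getD d G.v0 ≠ ρ d then
      coal (G.owner (ρ (Nat.find hx - 1))) (G.lastV h) else ρ h.length
  have ht1 : ∀ (π : ℕ → V) (n : ℕ), (∀ d ≤ n, π d = ρ d) →
      t ((List.range (n + 1)).map π) = ρ (n + 1) := by
    intro π n h
    have : ¬ ∃ d, d < ((List.range (n + 1)).map π).length ∧
        ((List.range (n + 1)).map π).getD d G.v0 ≠ ρ d := by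
      rintro ⟨d, hd, hd'⟩
      simp at hd
      apply hd'
      simp [hd, h d (by omega)]
    simp only [t, dif_neg this]
    simp
  have ht2 : ∀ (π : ℕ → V) (n d : ℕ), d ≤ n → π d ≠ ρ d → (∀ e < d, π e = ρ e) →
      t ((List.range (n + 1)).map π) = coal (G.owner (ρ (d - 1))) (π n) := by
    intro π n d hd hne hlt
    have hx : ∃ d, d < ((List.range (n + 1)).map π).length ∧
        ((List.range (n + 1)).map π).getD d G.v0 ≠ ρ d :=
      ⟨d, by simp; omega, by
        have : d < n + 1 := by omega
        simpa [this] using hne⟩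
    have hf : Nat.find hx = d := by
      rw [Nat.find_eq_iff]
      refine ⟨⟨by simp; omega, by
        have : d < n + 1 := by omega
        simpa [this] using hne⟩, ?_⟩
      rintro e he ⟨h1, h2⟩
      apply h2
      have : e < n + 1 := by omega
      simp [this, hlt e he]
    simp only [t, dif_pos hx, hf, lastV_map]
  have hprof : G.IsProfile (fun _ => t) := by
    intro i h hh ho
    by_cases hx : ∃ d, d < h.length ∧ h.getD d G.v0 ≠ ρ d
    · simp only [t, dif_pos hx]
      exact hcoal _ _
    · simp only [t, dif_neg hx]
      push Not at hx
      have hne := hh.1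
      have hpos : 0 < h.length := List.length_pos_iff.2 hne
      have : G.lastV h = ρ (h.length - 1) := by
        rw [← hx (h.length - 1) (by omega)]
        simp [lastV, List.getLastD_eq_getLast?, List.getLast?_eq_getElem?, List.getD_eq_getElem?_getD]
      rw [this]
      have h3 := hplay.2 (h.length - 1)
      rwa [Nat.sub_add_cancel hpos] at h3
  have hout : ∀ n, ∀ d ≤ n, G.outcome (fun _ => t) d = ρ d := by
    intro n
    induction n with
    | zero =>
      intro d hd
      obtain rfl : d = 0 := by omega
      rw [outcome_zero, hplay.1]
    | succ n ih =>
      intro d hd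
      rcases Nat.lt_or_ge d (n + 1) with h | h
      · exact ih d (by omega)
      · obtain rfl : d = n + 1 := by omega
        rw [outcome_succ, outHist_eq]
        exact ht1 _ _ ih
  have hout' : G.outcome (fun _ => t) = ρ := funext fun n => hout n n le_rfl
  refine ⟨fun _ => t, hprof, ?_, hout'⟩
  intro j σ hσ
  rw [hout', cost_le_iff]
  intro l hl
  have hup := G.isProfile_update hprof hσ
  have hπp := G.isPlay_outcome hup
  have hstep : ∀ i, G.owner (G.outcome (Function.update (fun _ => t) j σ) i) ≠ j →
      G.outcome (Function.update (fun _ => t) j σ) (i + 1) =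
      t ((List.range (i + 1)).map (G.outcome (Function.update (fun _ => t) j σ))) := by
    intro i hi
    rw [outcome_succ, Function.update_of_ne hi, outHist_eq]
  generalize G.outcome (Function.update (fun _ => t) j σ) = π at *
  by_cases hagree : ∀ d ≤ l, π d = ρ d
  · exact ⟨l, le_rfl, by rw [← hagree l le_rfl]; exact hl⟩
  have hx : ∃ d, d ≤ l ∧ π d ≠ ρ d := by push Not at hagree; exact hagree
  obtain ⟨hdl, hdne⟩ := Nat.find_spec hx
  have hmin : ∀ e < Nat.find hx, π e = ρ e := by
    intro e he
    by_contra h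
    exact Nat.find_min hx he ⟨by omega, h⟩
  generalize Nat.find hx = d at *
  obtain ⟨c, rfl⟩ : ∃ c, d = c + 1 := by
    cases d with
    | zero => exact absurd (hπp.1.trans hplay.1.symm) hdne
    | succ c => exact ⟨c, rfl⟩
  have hown : G.owner (π c) = j := by
    by_contra ho
    apply hdne
    rw [hstep c ho]
    exact ht1 _ _ fun e he => hmin e (by omega)
  have hown' : G.owner (ρ c) = j := by rw [← hmin c (by omega)]; exact hown
  have hback : ∀ m, m ≤ l - c → π (l - m) ∈ G.W j m := by
    intro m
    induction m with
    | zero => intro _; exact hl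
    | succ m ih =>
      intro hm
      have ih := ih (by omega)
      obtain ⟨i, hi⟩ : ∃ i, i = l - (m + 1) := ⟨_, rfl⟩
      have e1 : l - m = i + 1 := by omega
      rw [e1] at ih
      rw [← hi]
      by_cases ho : G.owner (π i) = j
      · exact Or.inr (Or.inl ⟨ho, _, hπp.2 i, ih⟩)
      · have hic : i ≠ c := by rintro rfl; exact ho hown
        rw [hstep i ho, ht2 π i (c + 1) (by omega) hdne hmin, Nat.add_sub_cancel, hown'] at ih
        exact hcoal' j (π i) ho m ih
  have hc := hback (l - c) le_rfl
  rw [show l - (l - c) = c by omega, hmin c (by omega)] at hc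
  obtain ⟨l', h1, h2⟩ := hg j c _ hc
  exact ⟨l', by omega, h2⟩

/-- Good plays with set of visited players `T`, all of them visited at time at most `N`. -/
def Cand (T : Set P) (ρ : ℕ → V) (N : ℕ) : Prop :=
  G.IsPlay ρ ∧ G.Good ρ ∧ (∀ j l, ρ l ∈ G.goal j → j ∈ T) ∧ ∀ j ∈ T, ∃ l ≤ N, ρ l ∈ G.goal j

theorem cand_cut {T : Set P} {ρ : ℕ → V} {N : ℕ} (h : G.Cand T ρ N) {a b : ℕ} (hab : a < b)
    (hbN : b ≤ N) (he : ρ a = ρ b)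
    (hv : ∀ j, (∃ l ≤ b, ρ l ∈ G.goal j) → ∃ l ≤ a, ρ l ∈ G.goal j) :
    ∃ ρ', G.Cand T ρ' (N - (b - a)) := by
  obtain ⟨hp, hg, ht, hN⟩ := h
  let ρ' : ℕ → V := fun k => if k ≤ a then ρ k else ρ (k + (b - a))
  have h1 : ∀ k, k ≤ a → ρ' k = ρ k := fun k hk => if_pos hk
  have h2 : ∀ k, a ≤ k → ρ' k = ρ (k + (b - a)) := by
    intro k hk
    rcases hk.eq_or_lt with rfl | hk
    · rw [h1 _ le_rfl, he]; congr 1; omega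
    · exact if_neg (by omega)
  have key : ∀ j l m, ρ l ∈ G.goal j → l ≤ m + (b - a) → (m < a → l ≤ m) →
      ∃ l' ≤ m, ρ' l' ∈ G.goal j := by
    intro j l m hl hlm hma
    rcases Nat.lt_or_ge b l with hbl | hbl
    · refine ⟨l - (b - a), by omega, ?_⟩
      rw [h2 _ (by omega), Nat.sub_add_cancel (by omega)]
      exact hl
    · rcases Nat.lt_or_ge m a with hm | hm
      · exact ⟨l, hma hm, by rw [h1 _ (by have := hma hm; omega)]; exact hl⟩
      · obtain ⟨l', hl', hl''⟩ := hv j ⟨l, hbl, hl⟩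
        exact ⟨l', by omega, by rw [h1 _ hl']; exact hl''⟩
  refine ⟨ρ', ⟨by rw [h1 0 (by omega)]; exact hp.1, ?_⟩, ?_, ?_, ?_⟩
  · intro k
    rcases Nat.lt_or_ge k a with hk | hk
    · rw [h1 k hk.le, h1 (k + 1) hk]; exact hp.2 k
    · rw [h2 k hk, h2 (k + 1) (by omega), show k + 1 + (b - a) = k + (b - a) + 1 by omega]
      exact hp.2 _
  · intro j k n hk
    rcases Nat.lt_or_ge k a with hka | hka
    · rw [h1 k hka.le] at hk
      obtain ⟨l, hl, hl'⟩ := hg j k n hk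
      exact key j l _ hl' (by omega) (fun _ => hl)
    · rw [h2 k hka] at hk
      obtain ⟨l, hl, hl'⟩ := hg j _ n hk
      exact key j l _ hl' (by omega) (fun _ => by omega)
  · intro j l hl
    rcases Nat.lt_or_ge l a with hk | hk
    · rw [h1 l hk.le] at hl; exact ht j _ hl
    · rw [h2 l hk] at hl; exact ht j _ hl
  · intro j hj
    obtain ⟨l, hl, hl'⟩ := hN j hj
    exact key j l _ hl' (by omega) (fun _ => by omega)

theorem exists_short [Fintype P] [Fintype V] {T : Set P} (h : ∃ N ρ, G.Cand T ρ N) :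
    ∃ N ρ, G.Cand T ρ N ∧ N < Fintype.card P * Fintype.card V := by
  classical
  obtain ⟨ρ, hρ⟩ := Nat.find_spec h
  have hmin : ∀ M < Nat.find h, ∀ ρ', ¬ G.Cand T ρ' M := fun M hM ρ' h' =>
    Nat.find_min h hM ⟨ρ', h'⟩
  generalize Nat.find h = N at *
  refine ⟨N, ρ, hρ, ?_⟩
  have hP : 0 < Fintype.card P := Fintype.card_pos_iff.2 ⟨G.owner G.v0⟩
  have hV : 0 < Fintype.card V := Fintype.card_pos_iff.2 ⟨G.v0⟩
  rcases Nat.eq_zero_or_pos N with rfl | hN0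
  · positivity
  obtain ⟨hp, hg, ht, hN⟩ := id hρ
  let S : ℕ → Finset P := fun k => Finset.univ.filter fun j => ∃ l ≤ k, ρ l ∈ G.goal j
  have hS : ∀ k j, j ∈ S k ↔ ∃ l ≤ k, ρ l ∈ G.goal j := by intro k j; simp [S]
  have hSm : ∀ a b, a ≤ b → S a ⊆ S b := by
    intro a b hab j hj
    rw [hS] at *
    obtain ⟨l, hl, hl'⟩ := hj
    exact ⟨l, hl.trans hab, hl'⟩
  have hc : ∀ k < N, (S k).card < Fintype.card P := by
    intro k hk
    by_contra hcon
    have : S k = Finset.univ := by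
      rw [← Finset.card_eq_iff_eq_univ]
      exact le_antisymm (Finset.card_le_univ _) (by omega)
    refine hmin k hk ρ ⟨hp, hg, ht, fun j _ => ?_⟩
    rw [← hS, this]
    simp
  let f : Fin N → Fin (Fintype.card P) × V := fun k => (⟨(S k).card, hc k k.2⟩, ρ k)
  have key : ∀ a b, a < b → b < N → (S a).card = (S b).card → ρ a ≠ ρ b := by
    intro a b hab hb hcard he
    have hSS := Finset.eq_of_subset_of_card_le (hSm a b hab.le) hcard.ge
    obtain ⟨ρ', h'⟩ := G.cand_cut hρ hab hb.le he (by
      intro j hj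
      rw [← hS] at *
      rwa [hSS])
    exact hmin _ (by omega) ρ' h'
  have hf : Function.Injective f := by
    intro a b hab
    simp only [f, Prod.mk.injEq, Fin.mk.injEq] at hab
    ext
    rcases lt_trichotomy a.1 b.1 with h | h | h
    · exact absurd hab.2 (key _ _ h b.2 hab.1)
    · exact h
    · exact absurd hab.2.symm (key _ _ h a.2 hab.1.symm)
  obtain ⟨j, hj⟩ : T.Nonempty := by
    by_contra hne
    rw [Set.not_nonempty_iff_eq_empty] at hne
    exact hmin 0 hN0 ρ ⟨hp, hg, ht, by simp [hne]⟩
  obtain ⟨l, _, hl⟩ := hN j hj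
  have hns : ¬ Function.Surjective f := by
    intro hsur
    obtain ⟨k, hk⟩ := hsur (⟨0, hP⟩, ρ l)
    simp only [f, Prod.mk.injEq, Fin.mk.injEq, Finset.card_eq_zero] at hk
    have : j ∈ S k := (hS _ _).2 ⟨k, le_rfl, by rw [hk.2]; exact hl⟩
    rw [hk.1] at this
    simp at this
  have := Fintype.card_lt_of_injective_not_surjective f hf hns
  simpa using this

theorem exists_cand [Fintype P] {ρ : ℕ → V} (hp : G.IsPlay ρ) (hg : G.Good ρ) :
    ∃ N ρ', G.Cand {j | ∃ l, ρ l ∈ G.goal j} ρ' N := by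
  have h : ∀ j : {j | ∃ l, ρ l ∈ G.goal j}, ∃ l, ρ l ∈ G.goal j.1 := fun j => j.2
  choose f hf using h
  obtain ⟨N, hN⟩ := (Set.finite_range f).bddAbove
  exact ⟨N, ρ, hp, hg, fun j l hl => ⟨l, hl⟩,
    fun j hj => ⟨f ⟨j, hj⟩, hN ⟨_, rfl⟩, hf ⟨j, hj⟩⟩⟩

theorem cand_lasso {T : Set P} {ρ : ℕ → V} {N : ℕ} (h : G.Cand T ρ N) {s p : ℕ} (hp0 : 0 < p)
    (hs : N ≤ s) (he : ρ s = ρ (s + p)) :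
    G.Cand T (fun k => ρ (if k < s + 1 then k else s + 1 + (k - (s + 1)) % p)) N := by
  obtain ⟨hp, hg, ht, hN⟩ := h
  refine ⟨⟨by simpa using hp.1, ?_⟩, ?_, fun j l hl => ht j _ hl, ?_⟩
  · intro k
    dsimp only
    rcases lt_trichotomy k s with hk | rfl | hk
    · rw [if_pos (by omega), if_pos (by omega)]; exact hp.2 k
    · rw [if_pos (by omega), if_neg (by omega)]; simpa using hp.2 k
    · rw [if_neg (by omega), if_neg (by omega)]
      obtain ⟨m, rfl⟩ : ∃ m, k = s + 1 + m := ⟨k - (s + 1), by omega⟩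
      rw [show s + 1 + m + 1 - (s + 1) = m + 1 by omega, Nat.add_sub_cancel_left]
      have hlt := Nat.mod_lt m hp0
      rw [Nat.add_mod_eq_ite_aux m p hp0]
      split_ifs with hmp
      · have := hp.2 s
        rw [he] at this
        rw [show s + 1 + m % p = s + p by omega]
        rw [← he] at this ⊢
        exact this
      · exact hp.2 _
  · intro j k n hk
    have hfk : (if k < s + 1 then k else s + 1 + (k - (s + 1)) % p) ≤ k := by
      split_ifs with h
      · exact le_rfl
      · have := Nat.mod_le (k - (s + 1)) p
        omega
    obtain ⟨l, hl, hl'⟩ := hg j _ n hk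
    rcases Nat.lt_or_ge N l with hNl | hNl
    · obtain ⟨l', h1, h2⟩ := hN j (ht j l hl')
      refine ⟨l', by omega, ?_⟩
      dsimp only
      rw [if_pos (by omega)]; exact h2
    · refine ⟨l, by omega, ?_⟩
      dsimp only
      rw [if_pos (by omega)]; exact hl'
  · intro j hj
    obtain ⟨l, h1, h2⟩ := hN j hj
    refine ⟨l, h1, ?_⟩
    dsimp only
    rw [if_pos (by omega)]; exact h2

end Aux

end ReachGame

/-- From any Nash equilibrium `(σᵢ)` of `G` one can build a Nash
equilibrium `(τᵢ)` of the same type whose outcome has the form `αβ^ω`, where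
`Visit(α)` equals the type of `(σᵢ)` and `|αβ| < (|Π|+1)·|V|` (length in edges). -/
theorem nash_to_lasso_nash {P V : Type} [Fintype P] [DecidableEq P] [Fintype V]
    (G : ReachGame P V)
    (prof : P → List V → V) (hprof : G.IsProfile prof) (hnash : G.IsNash prof) :
    ∃ (τ : P → List V → V) (α β : List V),
      G.IsProfile τ ∧ G.IsNash τ ∧
      α ≠ [] ∧ β ≠ [] ∧
      G.visitL α = G.typeOf prof ∧
      G.typeOf τ = G.typeOf prof ∧
      (α ++ β).length - 1 < (Fintype.card P + 1) * Fintype.card V ∧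
      (∀ k : ℕ, G.outcome τ k =
        if k < α.length then α.getD k G.v0
        else β.getD ((k - α.length) % β.length) G.v0) := by
  obtain ⟨N, ρ, hc, hN⟩ := G.exists_short
    (G.exists_cand (G.isPlay_outcome hprof) (G.good_of_nash hprof hnash))
  obtain ⟨x, y, hxy, he⟩ := Fintype.exists_ne_map_eq_of_card_lt
    (fun i : Fin (Fintype.card V + 1) => ρ (N + i)) (by simp)
  obtain ⟨s, p, hp0, hs, hsp, he⟩ : ∃ s p, 0 < p ∧ N ≤ s ∧ s + p ≤ N + Fintype.card V ∧
      ρ s = ρ (s + p) := by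
    rcases lt_or_gt_of_ne (fun h => hxy (Fin.ext h) : x.1 ≠ y.1) with h | h
    · refine ⟨N + x, y - x, by omega, by omega, by omega, ?_⟩
      rw [show N + x.1 + (y.1 - x.1) = N + y.1 by omega]; exact he
    · refine ⟨N + y, x - y, by omega, by omega, by omega, ?_⟩
      rw [show N + y.1 + (x.1 - y.1) = N + x.1 by omega]; exact he.symm
  have hc2 := G.cand_lasso hc hp0 hs he
  obtain ⟨τ, h1, h2, h3⟩ := G.nash_of_good hc2.1 hc2.2.1
  refine ⟨τ, (List.range (s + 1)).map ρ, (List.range p).map (fun i => ρ (s + 1 + i)), h1, h2,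
    by simp, by simp; omega, ?_, ?_, ?_, ?_⟩
  · ext j
    constructor
    · rintro ⟨v, hv, hj⟩
      obtain ⟨l, hl, rfl⟩ := List.mem_map.1 hv
      exact hc.2.2.1 j l hj
    · intro hj
      obtain ⟨l, hl, hl'⟩ := hc.2.2.2 j hj
      exact ⟨ρ l, List.mem_map.2 ⟨l, List.mem_range.2 (by omega), rfl⟩, hl'⟩
  · ext j
    constructor
    · rintro ⟨l, hl⟩
      rw [h3] at hl
      exact hc2.2.2.1 j l hl
    · intro hj
      obtain ⟨l, hl, hl'⟩ := hc2.2.2.2 j hj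
      exact ⟨l, by rw [h3]; exact hl'⟩
  · simp only [List.length_append, List.length_map, List.length_range]
    rw [add_mul, one_mul]
    omega
  · intro k
    rw [h3]
    have hm := Nat.mod_lt (k - (s + 1)) hp0
    by_cases hk : k < s + 1
    · simp [hk]
    · simp [hk, hm]
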